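/- arXiv:2501.15124 — 3 statements merged into one kernel-verified Lean document; each statement's English description precedes it below -/
import Mathlib

section
/- Let G be a finite simple graph on n vertices that is triangle-free (contains no K_3 subgraph). If G is not bipartite, then the number of edges of G satisfies 4·e(G) ≤ (n−1)² + 4 (equivalently, e(G) ≤ (n−1)²/4 + 1). -/
/-!
Since `G` is not bipartite it has an odd closed walk; let `c` be a shortest one, of length `L`.
Triangle-freeness gives `L ≥ 5`. If a vertex `u` is adjacent to `c i` and `c j`, then replacing the
even one of the two arcs between `c i` and `c j` by the detour through `u` gives an odd closed walk,
so by minimality the even arc has length `2`. Hence `u` has at most two neighbours on `c`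
(three indices pairwise at cyclic distance `2` would force `L` to divide `2` or `6`), and the same
shortcutting shows that the `L` vertices of `c` are distinct.

With `m = n - L` vertices off the cycle, Mantel's theorem bounds the number of edges among them by
`m² / 4`, and counting adjacent pairs gives `4 e(G) ≤ 4 L + 8 m + m²`. This is at most
`(m + L - 1)² + 4` because `L ≥ 5`.
-/

open Finset SimpleGraph

/-- Mantel's theorem inside a vertex subset, counting ordered adjacent pairs. -/
lemma mantel_subset {V : Type*} [DecidableEq V] (G : SimpleGraph V)
    [DecidableRel G.Adj] (h : G.CliqueFree 3) (T : Finset V) :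
    2 * ∑ t ∈ T, #{x ∈ T | G.Adj t x} ≤ #T ^ 2 := by
  let H : SimpleGraph T := G.comap Subtype.val
  have hH : H.CliqueFree (2 + 1) :=
    h.comap ⟨⟨⟨Subtype.val, fun {_ _} hab => hab⟩, Subtype.val_injective⟩⟩
  have h1 := hH.card_edgeFinset_le
  have h2 := mul_card_edgeFinset_turanGraph_le (n := #T) (r := 2)
  rw [card_edgeFinset_turanGraph] at h2
  simp only [Fintype.card_coe] at h1
  have h3 := H.sum_degrees_eq_twice_card_edges
  have h4 : ∑ t ∈ T, #{x ∈ T | G.Adj t x} = ∑ v, H.degree v := by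
    rw [← Finset.sum_coe_sort T]
    refine Finset.sum_congr rfl fun t _ => ?_
    rw [← card_neighborFinset_eq_degree, ← Finset.card_map (Function.Embedding.subtype (· ∈ T))]
    congr 1
    ext x
    simp [H, and_comm]
  rw [h4, h3]
  omega

/-- The two arcs between two vertices of a closed walk, as walks. -/
lemma arcs {V : Type*} {G : SimpleGraph V} {v : V} (p : G.Walk v v) {i j : ℕ}
    (hij : i < j) (hj : j < p.length) :
    (∃ q : G.Walk (p.getVert i) (p.getVert j), q.length = j - i) ∧
    (∃ q : G.Walk (p.getVert i) (p.getVert j), q.length = p.length - (j - i)) := by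
  constructor
  · have e : (p.drop i).getVert (j - i) = p.getVert j := by
      rw [Walk.drop_getVert]; congr 1; omega
    refine ⟨((p.drop i).take (j - i)).copy rfl e, ?_⟩
    rw [Walk.length_copy, Walk.take_length, Walk.drop_length]; omega
  · refine ⟨((p.drop j).append (p.take i)).reverse, ?_⟩
    rw [Walk.length_reverse, Walk.length_append, Walk.take_length, Walk.drop_length]; omega

/-- The set `S` is the vertex set of a shortest odd closed walk. -/
lemma exists_cycle_set {V : Type*} [DecidableEq V] (G : SimpleGraph V)
    [DecidableRel G.Adj] (h : G.CliqueFree 3) (hb : ¬ G.Colorable 2) :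
    ∃ S : Finset V, 5 ≤ #S ∧ ∀ u, #{x ∈ S | G.Adj u x} ≤ 2 := by
  classical
  have hex : ∃ L, Odd L ∧ ∃ v, ∃ p : G.Walk v v, p.length = L := by
    rw [two_colorable_iff_forall_loop_even] at hb
    push Not at hb
    obtain ⟨v, p, hp⟩ := hb
    exact ⟨_, by simpa using hp, v, p, rfl⟩
  obtain ⟨hodd, v, p, hp⟩ := Nat.find_spec hex
  have hmin : ∀ {w : V} (q : G.Walk w w), Odd q.length → p.length ≤ q.length := fun q hq => by
    rw [hp]; exact Nat.find_min' hex ⟨hq, _, q, rfl⟩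
  rw [← hp] at hodd
  clear hp
  have hadj : ∀ i < p.length, G.Adj (p.getVert i) (p.getVert (i + 1)) :=
    fun i hi => p.adj_getVert_succ hi
  have hL : 5 ≤ p.length := by
    by_contra hlt
    obtain ⟨k, hk⟩ := hodd
    have hend := p.getVert_length
    have hstart := p.getVert_zero
    obtain h1 | h3 : p.length = 1 ∨ p.length = 3 := by omega
    · have := hadj 0 (by omega)
      rw [h1] at hend
      rw [zero_add, hend, hstart] at this
      exact this.ne rfl
    · have a := hadj 0 (by omega)
      have b := hadj 1 (by omega)
      have c := hadj 2 (by omega)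
      norm_num at a b c
      rw [h3] at hend
      rw [hend] at c
      exact h _ (is3Clique_triple_iff.2 ⟨a, c.symm, b⟩)
  have hinj : Set.InjOn p.getVert (range p.length : Finset ℕ) := by
    have key : ∀ i j, i < j → j < p.length → p.getVert i ≠ p.getVert j := by
      intro i j hij hj he
      obtain ⟨⟨q, hq⟩, ⟨r, hr⟩⟩ := arcs p hij hj
      have h1 := hmin (q.copy rfl he.symm)
      have h2 := hmin (r.copy rfl he.symm)
      rw [Walk.length_copy, hq, Nat.odd_iff] at h1
      rw [Walk.length_copy, hr, Nat.odd_iff] at h2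
      rw [Nat.odd_iff] at hodd
      omega
    intro i hi j hj he
    simp only [coe_range, Set.mem_Iio] at hi hj
    rcases lt_trichotomy i j with hij | hij | hij
    · exact (key i j hij hj he).elim
    · exact hij
    · exact (key j i hij hi he.symm).elim
  have hnear : ∀ u i j, i < j → j < p.length → G.Adj u (p.getVert i) → G.Adj u (p.getVert j) →
      j = i + 2 ∨ j + 2 = i + p.length := by
    intro u i j hij hj hi' hj'
    obtain ⟨⟨q, hq⟩, ⟨r, hr⟩⟩ := arcs p hij hj
    have h1 := hmin (Walk.cons hi' (q.concat hj'.symm))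
    have h2 := hmin (Walk.cons hi' (r.concat hj'.symm))
    rw [Walk.length_cons, Walk.length_concat, hq, Nat.odd_iff] at h1
    rw [Walk.length_cons, Walk.length_concat, hr, Nat.odd_iff] at h2
    rw [Nat.odd_iff] at hodd
    omega
  refine ⟨(range p.length).image p.getVert, ?_, fun u => ?_⟩
  · rwa [card_image_of_injOn hinj, card_range]
  · rw [filter_image]
    refine card_image_le.trans ?_
    by_contra hgt
    obtain ⟨i, hi, j, hj, k, hk, hij, hik, hjk⟩ := two_lt_card.1 (not_le.1 hgt)
    simp only [mem_filter, mem_range] at hi hj hk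
    rw [Nat.odd_iff] at hodd
    have a := fun hlt => hnear u i j hlt hj.1 hi.2 hj.2
    have a' := fun hlt => hnear u j i hlt hi.1 hj.2 hi.2
    have b := fun hlt => hnear u i k hlt hk.1 hi.2 hk.2
    have b' := fun hlt => hnear u k i hlt hi.1 hk.2 hi.2
    have c := fun hlt => hnear u j k hlt hk.1 hj.2 hk.2
    have c' := fun hlt => hnear u k j hlt hj.1 hk.2 hj.2
    omega

/-- Erdős (1962): a triangle-free graph on `n` vertices that is not bipartite
(i.e. not 2-colorable) has at most `(n-1)²/4 + 1` edges, equivalently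
`4·e(G) ≤ (n-1)² + 4`. -/
theorem stmt_0 {V : Type*} [Fintype V] [DecidableEq V] (G : SimpleGraph V)
    [DecidableRel G.Adj]
    (htriangleFree : G.CliqueFree 3)
    (hnotBipartite : ¬ G.Colorable 2) :
    (4 * G.edgeFinset.card : ℤ) ≤ ((Fintype.card V : ℤ) - 1) ^ 2 + 4 := by
  obtain ⟨S, hS, hdeg⟩ := exists_cycle_set G htriangleFree hnotBipartite
  have hM := mantel_subset G htriangleFree Sᶜ
  have hsplit : ∀ u, G.degree u = #{x ∈ S | G.Adj u x} + #{x ∈ Sᶜ | G.Adj u x} := by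
    intro u
    rw [← card_neighborFinset_eq_degree, neighborFinset_eq_filter,
      ← card_union_of_disjoint (disjoint_filter_filter disjoint_compl_right), ← filter_union,
      union_compl]
  have hswap : ∑ u, #{x ∈ Sᶜ | G.Adj u x} = ∑ t ∈ Sᶜ, G.degree t := by
    have := sum_card_bipartiteAbove_eq_sum_card_bipartiteBelow (s := univ) (t := Sᶜ) G.Adj
    simp only [bipartiteAbove, bipartiteBelow] at this
    rw [this]
    refine sum_congr rfl fun t _ => ?_
    rw [← card_neighborFinset_eq_degree, neighborFinset_eq_filter]
    simp only [G.adj_comm]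
  have h1 : ∑ u, #{x ∈ S | G.Adj u x} ≤ Fintype.card V * 2 := by
    simpa using sum_le_card_nsmul univ _ 2 fun u _ => hdeg u
  have h2 : ∑ t ∈ Sᶜ, #{x ∈ S | G.Adj t x} ≤ #Sᶜ * 2 := by
    simpa only [smul_eq_mul] using sum_le_card_nsmul Sᶜ _ 2 fun u _ => hdeg u
  have h3 : ∑ t ∈ Sᶜ, G.degree t =
      ∑ t ∈ Sᶜ, #{x ∈ S | G.Adj t x} + ∑ t ∈ Sᶜ, #{x ∈ Sᶜ | G.Adj t x} := by
    rw [← sum_add_distrib]; exact sum_congr rfl fun t _ => hsplit t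
  have h4 : 2 * #G.edgeFinset =
      ∑ u, #{x ∈ S | G.Adj u x} + ∑ u, #{x ∈ Sᶜ | G.Adj u x} := by
    rw [← sum_degrees_eq_twice_card_edges, ← sum_add_distrib]
    exact sum_congr rfl fun t _ => hsplit t
  have hn : #S + #Sᶜ = Fintype.card V := card_add_card_compl S
  have hmain : 4 * #G.edgeFinset ≤ 4 * #S + 8 * #Sᶜ + #Sᶜ ^ 2 := by omega
  rw [← hn]
  zify at hmain hS
  push_cast
  nlinarith [mul_nonneg (sub_nonneg.2 hS) (Int.natCast_nonneg #Sᶜ)]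
end

section
/- Let G be a finite simple graph that is claw-free (no induced K_{1,3}), and let v be a vertex of G of degree k such that the complement of the induced subgraph G[N(v)] on the open neighborhood N(v) is not bipartite. Then 4·e(G[N[v]]) ≥ 4k + 2k(k−1) − (k−1)² − 4 (equivalently, e(G[N[v]]) ≥ k + C(k,2) − ((k−1)²/4 + 1)). -/
/-!
Let `H` be the complement of `G[N(v)]`, a graph on `k` vertices. Claw-freeness at `v` makes `H`
triangle-free, and `e(G[N[v]]) = k + C(k,2) - e(H)`, so the claim is the bound
`4 e(H) ≤ (k-1)² + 4` for a triangle-free non-bipartite graph `H` on `k` vertices.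

For that bound (`four_mul_card_edges_le`), let `x` have maximum degree `Δ` in `H`. The set `N(x)` is
independent, so, `H` not being bipartite, some edge `yz` avoids `N(x)`. Every edge of `H` then meets
one of the `k - Δ - 2` vertices outside `N(x) ∪ {y, z}`, or is `yz`, or joins `{y, z}` to `N(x)`.
There are at most `Δ` edges of the last kind, because `y` and `z` have no common neighbour. Hence
`e(H) ≤ Δ(k - Δ - 2) + 1 + Δ = Δ(k - 1 - Δ) + 1 ≤ (k-1)²/4 + 1`.
-/

/-- In a triangle-free graph `N(x)` is independent, so without an edge avoiding `N(x)` the pair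
`N(x)`, `N(x)ᶜ` would be a bipartition. -/
lemma exists_adj_outside_neighbors {W : Type*} (H : SimpleGraph W)
    (htri : ∀ a b c, H.Adj a b → H.Adj a c → ¬ H.Adj b c)
    (hbip : ¬ H.Colorable 2) (x : W) :
    ∃ y z, H.Adj y z ∧ ¬ H.Adj x y ∧ ¬ H.Adj x z := by
  classical
  by_contra! hcon
  refine hbip ⟨SimpleGraph.Coloring.mk (fun w => if H.Adj x w then (0 : Fin 2) else 1) ?_⟩
  intro a b hab
  by_cases ha : H.Adj x a
  · have hb : ¬ H.Adj x b := fun hb => htri x a b ha hb hab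
    simp [ha, hb]
  · have hb := hcon a b hab ha
    simp [ha, hb]

/-- A triangle-free non-bipartite graph on `n` vertices has at most `(n-1)²/4 + 1` edges. -/
lemma four_mul_card_edges_le {W : Type*} [Fintype W] [DecidableEq W] (H : SimpleGraph W)
    [DecidableRel H.Adj]
    (htri : ∀ a b c, H.Adj a b → H.Adj a c → ¬ H.Adj b c)
    (hbip : ¬ H.Colorable 2) :
    (4 * H.edgeFinset.card : ℤ) ≤ ((Fintype.card W : ℤ) - 1) ^ 2 + 4 := by
  have hne : Nonempty W := by
    by_contra hempty
    rw [not_nonempty_iff] at hempty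
    exact hbip (SimpleGraph.Colorable.of_isEmpty 2)
  obtain ⟨x, hx⟩ := H.exists_maximal_degree_vertex
  obtain ⟨y, z, hyz, hxy, hxz⟩ := exists_adj_outside_neighbors H htri hbip x
  let N := H.neighborFinset x
  -- the vertices outside `N(x) ∪ {y, z}`
  let S := (Nᶜ.erase y).erase z
  have hcover : H.edgeFinset ⊆ S.biUnion (fun w => H.incidenceFinset w) ∪ {s(y, z)} ∪
      ((N ∩ H.neighborFinset y).image (fun a => s(y, a)) ∪
        (N ∩ H.neighborFinset z).image (fun a => s(z, a))) := by
    intro e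
    induction e with
    | _ a b =>
      intro hab
      rw [SimpleGraph.mem_edgeFinset, SimpleGraph.mem_edgeSet] at hab
      by_cases haS : a ∈ S
      · simp only [Finset.mem_union, Finset.mem_biUnion]
        exact Or.inl (Or.inl ⟨a, haS, by simp [hab]⟩)
      by_cases hbS : b ∈ S
      · simp only [Finset.mem_union, Finset.mem_biUnion]
        exact Or.inl (Or.inl ⟨b, hbS, by simp [SimpleGraph.mk'_mem_incidenceSet_iff, hab]⟩)
      have hN := htri x a b
      have hba := hab.symm
      simp only [S, N, Finset.mem_erase, Finset.mem_compl, SimpleGraph.mem_neighborFinset]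
        at haS hbS
      simp only [N, Finset.mem_union, Finset.mem_singleton, Finset.mem_image, Finset.mem_inter,
        SimpleGraph.mem_neighborFinset, Sym2.eq_iff]
      have hirr := H.loopless.irrefl y
      have hirr' := H.loopless.irrefl z
      grind
  have hinc : (S.biUnion (fun w => H.incidenceFinset w)).card ≤ S.card * H.maxDegree :=
    Finset.card_biUnion_le_card_mul _ _ _ fun w _ => by
      rw [SimpleGraph.card_incidenceFinset_eq_degree]; exact H.degree_le_maxDegree w
  -- `y` and `z` have no common neighbour, so their neighbourhoods inside `N(x)` are disjoint
  have hyzN : (N ∩ H.neighborFinset y).card + (N ∩ H.neighborFinset z).card ≤ N.card := by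
    rw [← Finset.card_union_of_disjoint]
    · exact Finset.card_le_card (by grind)
    · rw [Finset.disjoint_left]
      intro a ha hb
      simp only [Finset.mem_inter, SimpleGraph.mem_neighborFinset] at ha hb
      exact htri y z a hyz ha.2 hb.2
  have hNcard : N.card = H.maxDegree := by rw [hx]; rfl
  have hS : S.card + 2 + N.card = Fintype.card W := by
    have hzmem : z ∈ Nᶜ.erase y := by simp [N, hxz, hyz.ne.symm]
    have hymem : y ∈ Nᶜ := by simp [N, hxy]
    have h1 := Finset.card_erase_add_one hzmem
    have h2 := Finset.card_erase_add_one hymem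
    have h3 := Finset.card_add_card_compl N
    change (((Nᶜ.erase y).erase z).card + 2 + N.card = _)
    omega
  have hcard : H.edgeFinset.card ≤ S.card * H.maxDegree + 1 + H.maxDegree := by
    refine (Finset.card_le_card hcover).trans ((Finset.card_union_le _ _).trans ?_)
    refine Nat.add_le_add ((Finset.card_union_le _ _).trans ?_)
      ((Finset.card_union_le _ _).trans ?_)
    · simpa using hinc
    · exact (Nat.add_le_add Finset.card_image_le Finset.card_image_le).trans (hyzN.trans hNcard.le)
  rw [hNcard] at hS
  rw [← hS]
  zify at hcard
  push_cast
  nlinarith [sq_nonneg ((S.card : ℤ) + 1 - H.maxDegree)]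

lemma card_edges_add_compl {W : Type*} [Fintype W] [DecidableEq W] (H : SimpleGraph W)
    [DecidableRel H.Adj] :
    H.edgeFinset.card + Hᶜ.edgeFinset.card = (Fintype.card W).choose 2 := by
  rw [← SimpleGraph.card_edgeFinset_top_eq_card_choose_two, ← Finset.card_union_of_disjoint]
  · congr 1
    ext e
    induction e with
    | _ a b =>
      simp only [Finset.mem_union, SimpleGraph.mem_edgeFinset, SimpleGraph.mem_edgeSet,
        SimpleGraph.compl_adj, SimpleGraph.top_adj]
      have hirr : H.Adj a b → a ≠ b := fun h => h.ne
      tauto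
  · rw [SimpleGraph.disjoint_edgeFinset]
    exact disjoint_compl_right

/-- The closed neighbourhood spans the edges inside `N(v)` together with the edges at `v`. -/
lemma degree_add_edges_le {V : Type*} [Fintype V] (G : SimpleGraph V) [DecidableRel G.Adj]
    (v : V) :
    G.degree v + (G.induce (G.neighborSet v)).edgeSet.ncard ≤
      (G.induce (insert v (G.neighborSet v))).edgeSet.ncard := by
  classical
  let ι : G.neighborSet v → (insert v (G.neighborSet v) : Set V) :=
    Set.inclusion (Set.subset_insert _ _)
  have hι : Function.Injective ι := Set.inclusion_injective _
  let v' : (insert v (G.neighborSet v) : Set V) := ⟨v, Set.mem_insert _ _⟩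
  have hv' : ∀ a, ι a ≠ v' := fun a h =>
    G.loopless.irrefl v (by
      have h' : (a : V) = v := congrArg Subtype.val h
      have h'' := a.2
      rw [h'] at h''
      exact h'')
  have hstar : (Set.range fun a => s(v', ι a)).ncard = G.degree v := by
    rw [← Nat.card_coe_set_eq, Nat.card_range_of_injective, Nat.card_eq_fintype_card,
      G.card_neighborSet_eq_degree]
    intro a b h
    exact hι (by simpa [hv'] using h)
  rw [← hstar, ← Set.ncard_image_of_injective _ (Sym2.map.injective hι),
    ← Set.ncard_union_eq]
  · refine Set.ncard_le_ncard ?_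
    rintro e (⟨a, rfl⟩ | ⟨e, he, rfl⟩)
    · exact a.2
    · induction e with
      | _ a b => exact he
  · rw [Set.disjoint_left]
    rintro _ ⟨a, rfl⟩ ⟨e, he, h⟩
    induction e with
    | _ b c =>
      simp only [Sym2.map_mk, Sym2.eq_iff] at h
      rcases h with h | h
      · exact hv' _ h.1
      · exact hv' _ h.2

/-- If `G` is claw-free and `v` is a vertex of degree `k` such that the
complement of the subgraph induced on `N(v)` is not bipartite, then
`4·e(G[N[v]]) ≥ 4k + 2k(k-1) − (k-1)² − 4`. -/
theorem stmt_4 {V : Type*} [Fintype V] (G : SimpleGraph V) [DecidableRel G.Adj]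
    (hclawFree : ∀ u x y z : V, x ≠ y → x ≠ z → y ≠ z →
      G.Adj u x → G.Adj u y → G.Adj u z →
      (G.Adj x y ∨ G.Adj x z ∨ G.Adj y z))
    (v : V) (k : ℕ) (hk : G.degree v = k)
    (hnotBipartite : ¬ ((G.induce (G.neighborSet v))ᶜ).Colorable 2) :
    (4 * (G.induce (insert v (G.neighborSet v))).edgeSet.ncard : ℤ) ≥
      4 * (k : ℤ) + 2 * (k : ℤ) * ((k : ℤ) - 1) - ((k : ℤ) - 1) ^ 2 - 4 := by
  classical
  have htri : ∀ a b c, ((G.induce (G.neighborSet v))ᶜ).Adj a b →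
      ((G.induce (G.neighborSet v))ᶜ).Adj a c → ¬ ((G.induce (G.neighborSet v))ᶜ).Adj b c := by
    intro a b c hab hac hbc
    simp only [SimpleGraph.compl_adj, SimpleGraph.comap_adj, Function.Embedding.subtype_apply]
      at hab hac hbc
    rcases hclawFree v a b c (Subtype.coe_ne_coe.2 hab.1) (Subtype.coe_ne_coe.2 hac.1)
      (Subtype.coe_ne_coe.2 hbc.1) a.2 b.2 c.2 with h | h | h
    · exact hab.2 h
    · exact hac.2 h
    · exact hbc.2 h
  have hmain := four_mul_card_edges_le _ htri hnotBipartite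
  have hle := degree_add_edges_le G v
  have hcompl := card_edges_add_compl (G.induce (G.neighborSet v))
  have hcardN : Fintype.card (G.neighborSet v) = k := by
    rw [G.card_neighborSet_eq_degree, hk]
  have hnc : (G.induce (G.neighborSet v)).edgeSet.ncard =
      (G.induce (G.neighborSet v)).edgeFinset.card := by
    rw [← SimpleGraph.coe_edgeFinset, Set.ncard_coe_finset]
  rw [hcardN] at hmain hcompl
  rw [hnc, hk] at hle
  have hchoose : (2 * (k.choose 2) : ℤ) = k * (k - 1) := by
    have h : (k.choose 2 : ℚ) = k * (k - 1) / 2 := Nat.cast_choose_two ℚ k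
    have h' : (2 * (k.choose 2) : ℚ) = k * (k - 1) := by rw [h]; ring
    exact_mod_cast h'
  zify at hle hcompl
  linarith
end

section
/- Let G be a finite simple graph satisfying: (i) G is claw-free (no induced K_{1,3}); (ii) G contains no clique of size 7; and (iii) for every vertex v of G, the subgraph induced by the closed neighborhood N[v] has at most 4·(deg(v)+1) − 9 edges. Then the maximum degree of G is at most 10. -/
/-!
Let `N` be the neighbourhood of a vertex `v` of degree `d`, and let `T` be the complement of `G[N]`.
Claw-freeness makes `T` triangle-free, so each `T`-neighbourhood is a clique of `G`; together with
`v` it has at most 6 vertices, so all `T`-degrees are at most 5. Removing the `d` edges at `v`, the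
edge bound gives `2 e(G[N]) ≤ 6d - 10`, so the `T`-degrees sum to at least `d(d-1) - (6d-10)`.
Comparing with the upper bound `5d` excludes `d ≥ 12`.

For `d = 11` the `T`-degrees sum to at least 54 out of 55, so at most one vertex has `T`-degree
less than 5, and that vertex has `T`-degree 4. Hence there is a `T`-edge `xy` whose ends have
`T`-degree 5. The sets `T(x)`, `T(y)` are disjoint and `T`-independent and cover all of `N` but
one vertex `z`. As there is no `T`-independent 6-set, `z` has `p ≥ 1` `T`-neighbours in `T(x)` and
`q ≥ 1` in `T(y)`. A `T`-neighbour `a ∈ T(x)` of `z` is `T`-adjacent to none of those `q` vertices,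
so `a` has `T`-degree at most `6 - q`; symmetrically some `b ∈ T(y)` has `T`-degree at most `6 - p`.
The `T`-degrees of `z`, `a`, `b` then add up to at most `p + q + (6 - q) + (6 - p) = 12`, whereas
they must add up to at least 14.
-/

open Finset

section

variable {V : Type*}

open Classical in
/-- The neighbourhood of `x` in the complement of `G[N]`. -/
noncomputable def coNbr (G : SimpleGraph V) (N : Finset V) (x : V) : Finset V :=
  N.filter fun y => y ≠ x ∧ ¬ G.Adj x y

lemma mem_coNbr {G : SimpleGraph V} {N : Finset V} {x y : V} :
    y ∈ coNbr G N x ↔ y ∈ N ∧ y ≠ x ∧ ¬ G.Adj x y := by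
  simp [coNbr]

lemma coNbr_subset (G : SimpleGraph V) (N : Finset V) (x : V) : coNbr G N x ⊆ N :=
  fun _ h => (mem_coNbr.1 h).1

/-- If the complement of `G[N]` is triangle-free and its independent sets have at most 5 vertices,
then on 11 vertices it has at most 26 edges. -/
lemma sum_coNbr_lt (G : SimpleGraph V) (N : Finset V) (hN : N.card = 11)
    (htri : ∀ x ∈ N, ∀ y ∈ coNbr G N x, ∀ z ∈ coNbr G N x, y ≠ z → G.Adj y z)
    (hind : ∀ s ⊆ N, (∀ y ∈ s, ∀ z ∈ s, y ≠ z → G.Adj y z) → s.card ≤ 5) :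
    ∑ x ∈ N, (coNbr G N x).card < 54 := by
  classical
  by_contra! hsum
  have hsub : ∀ x, coNbr G N x ⊆ N := coNbr_subset G N
  have hle : ∀ x ∈ N, (coNbr G N x).card ≤ 5 := fun x hx => hind _ (hsub x) (htri x hx)
  have hdef : ∀ s ⊆ N, 5 * s.card ≤ ∑ x ∈ s, (coNbr G N x).card + 1 := by
    intro s hs
    have h1 : ∑ x ∈ N \ s, (coNbr G N x).card ≤ (N \ s).card * 5 :=
      sum_le_card_nsmul _ _ _ fun x hx => hle x (mem_sdiff.1 hx).1
    have h2 := sum_sdiff (f := fun x => (coNbr G N x).card) hs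
    have h3 := card_sdiff_add_card_eq_card hs
    omega
  have hdef2 : ∀ a ∈ N, ∀ b ∈ N, a ≠ b →
      9 ≤ (coNbr G N a).card + (coNbr G N b).card := by
    intro a ha b hb hab
    have := hdef {a, b} (by grind)
    rw [card_pair hab, sum_pair hab] at this
    omega
  -- a vertex `x` of full co-degree, then a co-neighbour `y` of full co-degree
  obtain ⟨x, hx, hx5⟩ : ∃ x ∈ N, (coNbr G N x).card = 5 := by
    obtain ⟨a, ha, b, hb, hab⟩ := one_lt_card.1 (by omega : 1 < N.card)
    have := hdef2 a ha b hb hab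
    have := hle a ha
    have := hle b hb
    by_cases h : (coNbr G N a).card = 5
    · exact ⟨a, ha, h⟩
    · exact ⟨b, hb, by omega⟩
  obtain ⟨y, hyx, hy5⟩ : ∃ y ∈ coNbr G N x, (coNbr G N y).card = 5 := by
    obtain ⟨a, ha, b, hb, hab⟩ := one_lt_card.1 (by omega : 1 < (coNbr G N x).card)
    have := hdef2 a (hsub _ ha) b (hsub _ hb) hab
    have := hle a (hsub _ ha)
    have := hle b (hsub _ hb)
    by_cases h : (coNbr G N a).card = 5
    · exact ⟨a, ha, h⟩
    · exact ⟨b, hb, by omega⟩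
  have hy : y ∈ N := hsub _ hyx
  have hdisj : Disjoint (coNbr G N x) (coNbr G N y) := by
    rw [disjoint_left]
    intro w hwx hwy
    have h := htri x hx w hwx y hyx (mem_coNbr.1 hwy).2.1
    exact (mem_coNbr.1 hwy).2.2 h.symm
  have hU : (coNbr G N x ∪ coNbr G N y).card = 10 := by
    rw [card_union_of_disjoint hdisj]; omega
  obtain ⟨z, hz⟩ : ∃ z, N \ (coNbr G N x ∪ coNbr G N y) = {z} := by
    apply card_eq_one.1
    have := card_sdiff_add_card_eq_card (union_subset (hsub x) (hsub y))
    omega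
  have hzN : z ∈ N \ (coNbr G N x ∪ coNbr G N y) := by simp [hz]
  simp only [mem_sdiff, mem_union, not_or] at hzN
  obtain ⟨hzN, hzx, hzy⟩ := hzN
  have hcover : ∀ w ∈ N, w ∈ coNbr G N x ∨ w ∈ coNbr G N y ∨ w = z := by
    intro w hw
    by_contra! h
    have : w ∈ N \ (coNbr G N x ∪ coNbr G N y) := by
      simp [hw, h.1, h.2.1]
    rw [hz] at this
    exact h.2.2 (mem_singleton.1 this)
  -- adding `z` to an independent 5-set must create an edge of the complement
  have hex : ∀ u ∈ N, (coNbr G N u).card = 5 → z ∉ coNbr G N u →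
      ∃ a ∈ coNbr G N u, a ∈ coNbr G N z := by
    intro u hu hu5 hzu
    by_contra! h
    have hadj : ∀ a ∈ coNbr G N u, G.Adj z a := by
      intro a ha
      by_contra hn
      exact h a ha (mem_coNbr.2 ⟨hsub _ ha, fun e => hzu (e ▸ ha), hn⟩)
    have := hind (insert z (coNbr G N u)) (insert_subset hzN (hsub u)) (by
      intro b hb c hc hbc
      rcases mem_insert.1 hb with hbz | hbu <;> rcases mem_insert.1 hc with hcz | hcu
      · exact absurd (hbz.trans hcz.symm) hbc
      · exact hbz ▸ hadj c hcu
      · exact hcz ▸ (hadj b hbu).symm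
      · exact htri u hu b hbu c hcu hbc)
    rw [card_insert_of_notMem hzu] at this
    omega
  obtain ⟨a, hax, haz⟩ := hex x hx hx5 hzx
  obtain ⟨b, hby, hbz⟩ := hex y hy hy5 hzy
  -- co-degree of a co-neighbour `c` of `z` on the side `T(u)`, with `w` the other end
  have hbound : ∀ u w c, u ∈ N → (coNbr G N w).card = 5 →
      (∀ t ∈ N, t ∈ coNbr G N u ∨ t ∈ coNbr G N w ∨ t = z) →
      c ∈ coNbr G N u → c ∈ coNbr G N z →
      (coNbr G N c).card + (coNbr G N z ∩ coNbr G N w).card ≤ 6 := by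
    intro u w c hu hw hcov hcu hcz
    have h1 : coNbr G N c ⊆ insert z (coNbr G N w \ coNbr G N z) := by
      intro t ht
      have ht' := mem_coNbr.1 ht
      rcases hcov t ht'.1 with h | h | h
      · exact absurd (htri u hu c hcu t h ht'.2.1.symm) ht'.2.2
      · refine mem_insert_of_mem (mem_sdiff.2 ⟨h, fun h' => ht'.2.2 ?_⟩)
        exact htri z hzN c hcz t h' ht'.2.1.symm
      · simp [h]
    have h2 := (card_le_card h1).trans (card_insert_le _ _)
    have h3 := card_sdiff_add_card_inter (coNbr G N w) (coNbr G N z)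
    rw [inter_comm] at h3
    omega
  have h1 := hbound x y a hx hy5 hcover hax haz
  have h2 := hbound y x b hy hx5 (fun t ht => by have := hcover t ht; tauto) hby hbz
  have h3 : (coNbr G N z).card ≤
      (coNbr G N z ∩ coNbr G N x).card + (coNbr G N z ∩ coNbr G N y).card := by
    refine (card_le_card ?_).trans (card_union_le _ _)
    intro t ht
    have ht' := mem_coNbr.1 ht
    have := hcover t ht'.1
    simp only [mem_union, mem_inter]
    tauto
  have hab : a ≠ b := fun e => disjoint_left.1 hdisj hax (e ▸ hby)
  have hza : z ≠ a := fun e => hzx (e ▸ hax)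
  have hzb : z ≠ b := fun e => hzy (e ▸ hby)
  have h4 := hdef {z, a, b} (by
    intro t ht
    simp only [mem_insert, mem_singleton] at ht
    rcases ht with rfl | rfl | rfl
    exacts [hzN, hsub _ hax, hsub _ hby])
  rw [card_eq_three.2 ⟨z, a, b, hza, hzb, hab, rfl⟩, sum_insert (by simp [hza, hzb]),
    sum_pair hab] at h4
  omega

/-- The handshake lemma for the subgraph induced by a finset. -/
lemma two_mul_ncard_induce (G : SimpleGraph V) [DecidableRel G.Adj] (S : Finset V) :
    2 * (G.induce (S : Set V)).edgeSet.ncard = ∑ x ∈ S, (S.filter (G.Adj x)).card := by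
  classical
  rw [← SimpleGraph.coe_edgeFinset, Set.ncard_coe_finset,
    ← SimpleGraph.sum_degrees_eq_twice_card_edges, ← Finset.sum_coe_sort S]
  refine Finset.sum_congr rfl fun x _ => ?_
  rw [← SimpleGraph.card_neighborFinset_eq_degree,
    ← Finset.card_map (Function.Embedding.subtype _)]
  congr 1
  ext y
  simp [and_comm]

end

/-- If `G` is claw-free, contains no clique of size 7, and for every vertex `v`
the subgraph induced by the closed neighborhood `N[v]` has at most
`4·(deg v + 1) − 9` edges, then the maximum degree of `G` is at most 10. -/
theorem stmt_5 {V : Type*} [Fintype V] (G : SimpleGraph V) [DecidableRel G.Adj]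
    (hclawFree : ∀ u x y z : V, x ≠ y → x ≠ z → y ≠ z →
      G.Adj u x → G.Adj u y → G.Adj u z →
      (G.Adj x y ∨ G.Adj x z ∨ G.Adj y z))
    (hK7free : G.CliqueFree 7)
    (hedges : ∀ v : V,
      ((G.induce (insert v (G.neighborSet v))).edgeSet.ncard : ℤ) ≤
        4 * ((G.degree v : ℤ) + 1) - 9) :
    ∀ v : V, G.degree v ≤ 10 := by
  classical
  intro v
  by_contra! hd
  set N := G.neighborFinset v with hNdef
  have hNcard : N.card = G.degree v := G.card_neighborFinset_eq_degree v
  have hmem : ∀ x, x ∈ N ↔ G.Adj v x := fun x => G.mem_neighborFinset v x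
  have hvN : v ∉ N := by simp [hmem]
  have htri : ∀ x ∈ N, ∀ y ∈ coNbr G N x, ∀ z ∈ coNbr G N x, y ≠ z → G.Adj y z := by
    intro x hx y hy z hz hyz
    rw [mem_coNbr, hmem] at hy hz
    rcases hclawFree v x y z hy.2.1.symm hz.2.1.symm hyz ((hmem x).1 hx) hy.1 hz.1 with h | h | h
    exacts [absurd h hy.2.2, absurd h hz.2.2, h]
  have hind : ∀ s ⊆ N, (∀ y ∈ s, ∀ z ∈ s, y ≠ z → G.Adj y z) → s.card ≤ 5 := by
    intro s hs hadj
    by_contra! h6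
    obtain ⟨t, hts, ht⟩ := exists_subset_card_eq (show 6 ≤ s.card from h6)
    have htc : G.IsNClique 6 t := by
      rw [SimpleGraph.isNClique_iff]
      exact ⟨fun y hy z hz => hadj y (hts hy) z (hts hz), ht⟩
    exact hK7free _ (htc.insert fun b hb => (hmem b).1 (hs (hts hb)))
  have hle : ∀ x ∈ N, (coNbr G N x).card ≤ 5 :=
    fun x hx => hind _ (coNbr_subset G N x) (htri x hx)
  have hset : (insert v (G.neighborSet v) : Set V) = ((insert v N : Finset V) : Set V) := by
    simp [hNdef]
  have he := hedges v
  have hhs := two_mul_ncard_induce G (insert v N)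
  rw [← hset, sum_insert hvN] at hhs
  have hv : ((insert v N).filter (G.Adj v)).card = N.card := by
    congr 1
    ext y
    simp only [mem_filter, mem_insert, hmem]
    constructor
    · exact fun h => h.2
    · exact fun h => ⟨Or.inr h, h⟩
  have hx : ∀ x ∈ N,
      ((insert v N).filter (G.Adj x)).card + (coNbr G N x).card = N.card := by
    intro x hx
    have hxv : G.Adj x v := ((hmem x).1 hx).symm
    rw [filter_insert, if_pos hxv, card_insert_of_notMem (by simp [hvN])]
    -- `N` consists of `x`, the neighbours and the co-neighbours of `x`
    have h1 : N.erase x = N.filter (G.Adj x) ∪ coNbr G N x := by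
      ext y
      simp only [mem_erase, mem_union, mem_filter, mem_coNbr]
      have : G.Adj x y → y ≠ x := fun h => h.ne'
      tauto
    have h2 : Disjoint (N.filter (G.Adj x)) (coNbr G N x) := by
      rw [disjoint_left]
      intro y hy hy'
      exact (mem_coNbr.1 hy').2.2 (mem_filter.1 hy).2
    have h3 := card_erase_add_one hx
    rw [h1, card_union_of_disjoint h2] at h3
    omega
  have hsum := sum_congr rfl hx
  rw [sum_add_distrib, sum_const, smul_eq_mul] at hsum
  have hup : ∑ x ∈ N, (coNbr G N x).card ≤ N.card * 5 := sum_le_card_nsmul _ _ _ hle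
  rw [← hNcard] at hd he
  rw [hv] at hhs
  have hkey : N.card * N.card + 10 ≤ 7 * N.card + ∑ x ∈ N, (coNbr G N x).card := by
    omega
  have h11 : N.card = 11 := by nlinarith
  have := sum_coNbr_lt G N h11 htri hind
  rw [h11] at hkey
  omega
end
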